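/- (Lubotzky–Phillips–Sarnak, Margulis, Morgenstern) For every prime power q and every N there exists a finite connected (q+1)-regular graph X with more than N vertices such that every eigenvalue λ of the adjacency matrix of X satisfies |λ| = q+1 or |λ| ≤ 2√q; that is, there exist infinitely many (q+1)-regular Ramanujan graphs. -/

import Mathlib

open Matrix
open scoped Classical

/-! ### Expected characteristic polynomials of sums of independent rank-one matrices -/

/-- A complex matrix whose quadratic form has positive imaginary part on nonzero vectors. -/
def PosIm {V : Type*} [Fintype V] (M : Matrix V V ℂ) : Prop :=
  ∀ x : V → ℂ, x ≠ 0 → 0 < (star x ⬝ᵥ M *ᵥ x).im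

/-- The complex rank-one matrix `r rᵀ` of a real vector `r`. -/
noncomputable def rankOne {V : Type*} (r : V → ℝ) : Matrix V V ℂ :=
  (vecMulVec r r).map Complex.ofReal

lemma PosIm.det_ne_zero {V : Type*} [Fintype V] [DecidableEq V] {M : Matrix V V ℂ}
    (hM : PosIm M) : M.det ≠ 0 := by
  intro h
  obtain ⟨v, hv, hv0⟩ := Matrix.exists_mulVec_eq_zero_iff.mpr h
  simpa [hv0] using hM v hv

lemma star_dotProduct_rankOne_mulVec {V : Type*} [Fintype V] (r : V → ℝ) (x : V → ℂ) :
    star x ⬝ᵥ rankOne r *ᵥ x = (Complex.normSq (∑ i, (r i : ℂ) * x i) : ℂ) := by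
  rw [Complex.normSq_eq_conj_mul_self]
  simp only [dotProduct, mulVec, rankOne, vecMulVec_apply, Matrix.map_apply, map_sum, map_mul,
    Complex.conj_ofReal, Pi.star_apply, RCLike.star_def, Complex.ofReal_mul]
  rw [Finset.sum_mul_sum]
  simp only [Finset.mul_sum]
  refine Finset.sum_congr rfl fun i _ => Finset.sum_congr rfl fun j _ => ?_
  ring

lemma PosIm.sub_smul_rankOne {V : Type*} [Fintype V] {M : Matrix V V ℂ} (hM : PosIm M)
    (r : V → ℝ) {t : ℂ} (ht : t.im ≤ 0) : PosIm (M - t • rankOne r) := by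
  intro x hx
  have h := hM x hx
  rw [Matrix.sub_mulVec, Matrix.smul_mulVec, dotProduct_sub, dotProduct_smul,
    star_dotProduct_rankOne_mulVec, Complex.sub_im, smul_eq_mul, Complex.im_mul_ofReal]
  nlinarith [Complex.normSq_nonneg (∑ i, (r i : ℂ) * x i)]

lemma PosIm.sub_rankOne {V : Type*} [Fintype V] {M : Matrix V V ℂ} (hM : PosIm M)
    (r : V → ℝ) : PosIm (M - rankOne r) := by
  simpa using hM.sub_smul_rankOne r (t := 1) (by simp)

/-- The expectation of `det (M - ∑ v vᵀ)`, where `v` runs over independent random vectors, each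
equal to `r` with probability `p` and to `r'` with probability `1 - p` for an entry `(p, r, r')`
of the list. -/
noncomputable def mixedDet {V : Type*} [Fintype V] [DecidableEq V] :
    List (ℝ × (V → ℝ) × (V → ℝ)) → Matrix V V ℂ → ℂ
  | [], M => M.det
  | a :: L, M => (a.1 : ℂ) * mixedDet L (M - rankOne a.2.1)
      + (1 - a.1 : ℂ) * mixedDet L (M - rankOne a.2.2)

lemma mixedDet_sub_smul_rankOne {V : Type*} [Fintype V] [DecidableEq V]
    (L : List (ℝ × (V → ℝ) × (V → ℝ))) (r : V → ℝ) {M : Matrix V V ℂ} (hM : PosIm M) :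
    ∃ g : ℂ, ∀ t : ℂ, mixedDet L (M - t • rankOne r) = mixedDet L M - t * g := by
  induction L generalizing M with
  | nil =>
    refine ⟨M.det * (∑ i, (∑ j, (r j : ℂ) * M⁻¹ j i) * (r i : ℂ)), fun t => ?_⟩
    have h := Matrix.det_add_replicateCol_mul_replicateRow (ι := Unit) (A := M)
      (isUnit_iff_ne_zero.mpr hM.det_ne_zero) (fun i => -t * (r i : ℂ)) (fun i => (r i : ℂ))
    have e : M - t • rankOne r = M + replicateCol Unit (fun i => -t * (r i : ℂ)) *
        replicateRow Unit (fun i => (r i : ℂ)) := by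
      ext i j
      simp [rankOne, vecMulVec_apply, Matrix.mul_apply]
      ring
    rw [mixedDet, mixedDet, e, h, Matrix.det_unique (n := Unit)]
    simp only [Matrix.add_apply, Matrix.mul_apply, replicateRow_apply, replicateCol_apply,
      Matrix.one_apply_eq, Finset.mul_sum]
    rw [mul_add, mul_one, sub_eq_add_neg, Finset.mul_sum, ← Finset.sum_neg_distrib]
    congr 1
    refine Finset.sum_congr rfl fun i _ => ?_
    ring
  | cons a L ih =>
    obtain ⟨g₁, h₁⟩ := ih (hM.sub_rankOne a.2.1)
    obtain ⟨g₂, h₂⟩ := ih (hM.sub_rankOne a.2.2)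
    refine ⟨a.1 * g₁ + (1 - a.1) * g₂, fun t => ?_⟩
    rw [mixedDet, mixedDet, sub_right_comm, sub_right_comm M _ (rankOne a.2.2), h₁, h₂]
    ring

lemma im_nonpos_and_of_one_sub_mul_ne_zero {h : ℂ} (H : ∀ t : ℂ, t.im ≤ 0 → 1 - t * h ≠ 0) :
    h.im ≤ 0 ∧ (h.im = 0 → h = 0) := by
  by_cases h0 : h = 0
  · simp [h0]
  have hpos : 0 < Complex.normSq h := Complex.normSq_pos.mpr h0
  have : 0 < (h⁻¹).im := by
    by_contra hc
    exact H h⁻¹ (not_lt.mp hc) (by rw [inv_mul_cancel₀ h0, sub_self])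
  rw [Complex.inv_im] at this
  have h1 : 0 < -h.im := by
    by_contra hc
    exact absurd this (not_lt.mpr (div_nonpos_of_nonpos_of_nonneg (not_lt.mp hc) hpos.le))
  exact ⟨by linarith, fun h2 => by linarith⟩

lemma mixedDet_ne_zero {V : Type*} [Fintype V] [DecidableEq V]
    (L : List (ℝ × (V → ℝ) × (V → ℝ))) (hL : ∀ a ∈ L, 0 ≤ a.1 ∧ a.1 ≤ 1)
    {M : Matrix V V ℂ} (hM : PosIm M) : mixedDet L M ≠ 0 := by
  induction L generalizing M with
  | nil => exact hM.det_ne_zero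
  | cons a L ih =>
    have ih' : ∀ {M : Matrix V V ℂ}, PosIm M → mixedDet L M ≠ 0 :=
      fun hM => ih (fun b hb => hL b (List.mem_cons_of_mem _ hb)) hM
    have hF := ih' hM
    have key : ∀ r : V → ℝ, ∃ h : ℂ, mixedDet L (M - rankOne r) = mixedDet L M * (1 - h) ∧
        h.im ≤ 0 ∧ (h.im = 0 → h = 0) := by
      intro r
      obtain ⟨g, hg⟩ := mixedDet_sub_smul_rankOne L r hM
      refine ⟨g / mixedDet L M, ?_, im_nonpos_and_of_one_sub_mul_ne_zero fun t ht h0 => ?_⟩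
      · have := hg 1
        rw [one_smul] at this
        rw [this]
        field_simp
      · apply ih' (hM.sub_smul_rankOne r ht)
        rw [hg t]
        field_simp at h0
        rwa [mul_zero] at h0
    obtain ⟨h₁, e₁, i₁, z₁⟩ := key a.2.1
    obtain ⟨h₂, e₂, i₂, z₂⟩ := key a.2.2
    obtain ⟨hp0, hp1⟩ := hL a List.mem_cons_self
    rw [mixedDet, e₁, e₂]
    intro h0
    have h1 : (a.1 : ℂ) * h₁ + (1 - a.1) * h₂ = 1 := by
      have : mixedDet L M * (1 - ((a.1 : ℂ) * h₁ + (1 - a.1) * h₂)) = 0 := by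
        rw [← h0]; ring
      rcases mul_eq_zero.mp this with h | h
      · exact absurd h hF
      · linear_combination -h
    have him := congrArg Complex.im h1
    have hre := congrArg Complex.re h1
    simp at him hre
    have q1 : a.1 * h₁.im ≤ 0 := mul_nonpos_of_nonneg_of_nonpos hp0 i₁
    have q2 : (1 - a.1) * h₂.im ≤ 0 := mul_nonpos_of_nonneg_of_nonpos (by linarith) i₂
    have z1 : a.1 * h₁.re = 0 := by
      rcases mul_eq_zero.mp (show a.1 * h₁.im = 0 by linarith) with h | h
      · rw [h, zero_mul]
      · rw [z₁ h]; simp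
    have z2 : (1 - a.1) * h₂.re = 0 := by
      rcases mul_eq_zero.mp (show (1 - a.1) * h₂.im = 0 by linarith) with h | h
      · rw [h, zero_mul]
      · rw [z₂ h]; simp
    linarith

/-- The expectation of the characteristic polynomial of `B + ∑ v vᵀ`, with random vectors `v` as
in `mixedDet`. -/
noncomputable def mixedCharpoly {V : Type*} [Fintype V] [DecidableEq V] :
    List (ℝ × (V → ℝ) × (V → ℝ)) → Matrix V V ℝ → Polynomial ℝ
  | [], B => B.charpoly
  | a :: L, B => Polynomial.C a.1 * mixedCharpoly L (B + vecMulVec a.2.1 a.2.1)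
      + Polynomial.C (1 - a.1) * mixedCharpoly L (B + vecMulVec a.2.2 a.2.2)

lemma aeval_mixedCharpoly {V : Type*} [Fintype V] [DecidableEq V]
    (L : List (ℝ × (V → ℝ) × (V → ℝ))) (B : Matrix V V ℝ) (z : ℂ) :
    Polynomial.aeval z (mixedCharpoly L B) =
      mixedDet L (Matrix.scalar V z - B.map Complex.ofReal) := by
  induction L generalizing B with
  | nil =>
    rw [mixedCharpoly, mixedDet, Polynomial.aeval_def, ← Polynomial.eval_map,
      ← Matrix.charpoly_map, Matrix.eval_charpoly]
    rfl
  | cons a L ih =>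
    have e : ∀ r : V → ℝ, Matrix.scalar V z - (B + vecMulVec r r).map Complex.ofReal =
        Matrix.scalar V z - B.map Complex.ofReal - rankOne r := by
      intro r
      ext i j
      simp [rankOne]
      ring
    simp only [mixedCharpoly, mixedDet, map_add, map_mul, ih, e, Polynomial.aeval_C,
      Complex.coe_algebraMap, Complex.ofReal_sub, Complex.ofReal_one]

lemma posIm_scalar_sub {V : Type*} [Fintype V] [DecidableEq V] {B : Matrix V V ℝ}
    (hB : B.IsSymm) {z : ℂ} (hz : 0 < z.im) :
    PosIm (Matrix.scalar V z - B.map Complex.ofReal) := by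
  intro x hx
  have h1 : (star x ⬝ᵥ B.map Complex.ofReal *ᵥ x).im = 0 := by
    rw [← Complex.conj_eq_iff_im]
    simp only [dotProduct, mulVec, Matrix.map_apply, map_sum, map_mul, Complex.conj_ofReal,
      Pi.star_apply, RCLike.star_def, Complex.conj_conj, Finset.mul_sum]
    rw [Finset.sum_comm]
    refine Finset.sum_congr rfl fun i _ => Finset.sum_congr rfl fun j _ => ?_
    rw [hB.apply]
    ring
  have h2 : star x ⬝ᵥ Matrix.scalar V z *ᵥ x = z * ((∑ i, Complex.normSq (x i) : ℝ) : ℂ) := by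
    simp only [dotProduct, Matrix.scalar_apply, mulVec_diagonal, Pi.star_apply, RCLike.star_def,
      Complex.ofReal_sum, Complex.normSq_eq_conj_mul_self, Finset.mul_sum]
    refine Finset.sum_congr rfl fun i _ => ?_
    ring
  rw [Matrix.sub_mulVec, dotProduct_sub, Complex.sub_im, h1, h2, Complex.im_mul_ofReal, sub_zero]
  refine mul_pos hz ?_
  obtain ⟨i, hi⟩ := Function.ne_iff.mp hx
  exact Finset.sum_pos' (fun j _ => Complex.normSq_nonneg _)
    ⟨i, Finset.mem_univ _, Complex.normSq_pos.mpr hi⟩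

lemma aeval_mixedCharpoly_ne_zero {V : Type*} [Fintype V] [DecidableEq V]
    {L : List (ℝ × (V → ℝ) × (V → ℝ))} (hL : ∀ a ∈ L, 0 ≤ a.1 ∧ a.1 ≤ 1)
    {B : Matrix V V ℝ} (hB : B.IsSymm) {z : ℂ} (hz : 0 < z.im) :
    Polynomial.aeval z (mixedCharpoly L B) ≠ 0 := by
  rw [aeval_mixedCharpoly]
  exact mixedDet_ne_zero L hL (posIm_scalar_sub hB hz)

lemma Polynomial.Monic.convexComb {n : ℕ} {f g : Polynomial ℝ} (hf : f.Monic) (hg : g.Monic)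
    (hfn : f.natDegree = n) (hgn : g.natDegree = n) (p : ℝ) :
    (Polynomial.C p * f + Polynomial.C (1 - p) * g).Monic ∧
      (Polynomial.C p * f + Polynomial.C (1 - p) * g).natDegree = n := by
  have hle : (Polynomial.C p * f + Polynomial.C (1 - p) * g).natDegree ≤ n :=
    (Polynomial.natDegree_add_le _ _).trans (max_le
      ((Polynomial.natDegree_C_mul_le _ _).trans hfn.le)
      ((Polynomial.natDegree_C_mul_le _ _).trans hgn.le))
  have hc : (Polynomial.C p * f + Polynomial.C (1 - p) * g).coeff n = 1 := by
    have h1 : f.coeff n = 1 := by rw [← hfn]; exact hf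
    have h2 : g.coeff n = 1 := by rw [← hgn]; exact hg
    rw [Polynomial.coeff_add, Polynomial.coeff_C_mul, Polynomial.coeff_C_mul, h1, h2]
    ring
  have hm := Polynomial.monic_of_natDegree_le_of_coeff_eq_one n hle hc
  exact ⟨hm, le_antisymm hle (Polynomial.le_natDegree_of_ne_zero (by rw [hc]; exact one_ne_zero))⟩

lemma mixedCharpoly_monic {V : Type*} [Fintype V] [DecidableEq V]
    (L : List (ℝ × (V → ℝ) × (V → ℝ))) (B : Matrix V V ℝ) :
    (mixedCharpoly L B).Monic ∧ (mixedCharpoly L B).natDegree = Fintype.card V := by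
  induction L generalizing B with
  | nil => exact ⟨B.charpoly_monic, B.charpoly_natDegree_eq_dim⟩
  | cons a L ih =>
    exact Polynomial.Monic.convexComb (ih _).1 (ih _).1 (ih _).2 (ih _).2 a.1

/-! ### Convex combinations of real-rooted polynomials -/

lemma pow_le_eval_of_realRooted {h : Polynomial ℝ} (hm : h.Monic)
    (hr : ∀ z : ℂ, 0 < z.im → Polynomial.aeval z h ≠ 0) {x : ℝ}
    (hx : ∀ z, x < z → 0 < h.eval z) {z : ℝ} (hz : x < z) :
    (z - x) ^ h.natDegree ≤ h.eval z := by
  have hroots : ∀ ρ ∈ (h.map (algebraMap ℝ ℂ)).roots, z - x ≤ ‖(z : ℂ) - ρ‖ := by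
    intro ρ hρ
    have hρ0 : Polynomial.aeval ρ h = 0 := by
      rw [Polynomial.mem_roots (hm.map _).ne_zero, Polynomial.IsRoot, Polynomial.eval_map] at hρ
      exact hρ
    have him : ρ.im = 0 := by
      rcases lt_trichotomy ρ.im 0 with hlt | heq | hgt
      · refine absurd ?_ (hr ((starRingEnd ℂ) ρ) (by simpa using hlt))
        rw [Polynomial.aeval_conj, hρ0, map_zero]
      · exact heq
      · exact absurd hρ0 (hr ρ hgt)
    have hρr : ρ = (ρ.re : ℂ) := by apply Complex.ext <;> simp [him]
    have hle : ρ.re ≤ x := by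
      by_contra hc
      have h1 := hx ρ.re (not_le.mp hc)
      rw [hρr, Polynomial.aeval_def, ← Complex.coe_algebraMap,
        Polynomial.eval₂_at_apply, Complex.coe_algebraMap, Complex.ofReal_eq_zero] at hρ0
      linarith
    calc z - x ≤ z - ρ.re := by linarith
      _ = ((z : ℂ) - ρ).re := by simp
      _ ≤ _ := Complex.re_le_norm _
  have h1 : h.eval z = ‖(h.map (algebraMap ℝ ℂ)).eval (z : ℂ)‖ := by
    rw [Polynomial.eval_map, ← Complex.coe_algebraMap, Polynomial.eval₂_at_apply,
      Complex.coe_algebraMap, Complex.norm_real, Real.norm_eq_abs, abs_of_pos (hx z hz)]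
  have hs := IsAlgClosed.splits (h.map (algebraMap ℝ ℂ))
  have hcard : h.natDegree = (h.map (algebraMap ℝ ℂ)).roots.card := by
    rw [← hs.natDegree_eq_card_roots, hm.natDegree_map]
  rw [h1, hs.eval_eq_prod_roots, (hm.map _).leadingCoeff, one_mul, hcard]
  generalize (h.map (algebraMap ℝ ℂ)).roots = s at hroots
  induction s using Multiset.induction_on with
  | empty => simp
  | cons a s ih =>
    rw [Multiset.card_cons, pow_succ', Multiset.map_cons, Multiset.prod_cons, norm_mul]
    have := ih fun ρ hρ => hroots ρ (Multiset.mem_cons_of_mem hρ)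
    exact mul_le_mul (hroots a (Multiset.mem_cons_self _ _)) this
      (pow_nonneg (by linarith) _) (norm_nonneg _)

lemma Polynomial.Monic.exists_root_ge {h : Polynomial ℝ} (hm : h.Monic) {z : ℝ}
    (hz : h.eval z ≤ 0) : ∃ x, z ≤ x ∧ h.eval x = 0 := by
  have hd : 0 < h.degree := by
    refine lt_of_not_ge fun hd => ?_
    rw [hm.degree_le_zero_iff_eq_one.mp hd, Polynomial.eval_one] at hz
    linarith
  have ht := h.tendsto_atTop_of_leadingCoeff_nonneg hd (by rw [hm]; exact zero_le_one)
  obtain ⟨R, hzR, hR⟩ := ((Filter.eventually_ge_atTop z).and (ht.eventually_ge_atTop 0)).exists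
  obtain ⟨x, hx, hx0⟩ := intermediate_value_Icc hzR h.continuousOn ⟨hz, hR⟩
  exact ⟨x, hx.1, hx0⟩

lemma Polynomial.Monic.exists_largest_root {h : Polynomial ℝ} (hm : h.Monic) {z : ℝ}
    (hz : h.eval z ≤ 0) :
    ∃ x, z ≤ x ∧ h.eval x = 0 ∧ ∀ y, x < y → 0 < h.eval y := by
  have hmem : ∀ {x}, h.eval x = 0 → x ∈ h.roots.toFinset := fun hx => by
    rw [Multiset.mem_toFinset, Polynomial.mem_roots hm.ne_zero]
    exact hx
  obtain ⟨x₀, hx₀, h0⟩ := hm.exists_root_ge hz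
  have hne : h.roots.toFinset.Nonempty := ⟨x₀, hmem h0⟩
  refine ⟨h.roots.toFinset.max' hne, hx₀.trans (Finset.le_max' _ _ (hmem h0)), ?_, ?_⟩
  · have := Finset.max'_mem _ hne
    rw [Multiset.mem_toFinset, Polynomial.mem_roots hm.ne_zero] at this
    exact this
  · intro y hy
    by_contra hc
    obtain ⟨w, hw, hw0⟩ := hm.exists_root_ge (not_lt.mp hc)
    exact absurd (Finset.le_max' _ _ (hmem hw0)) (not_le.mpr (hy.trans_le hw))

/-- If all convex combinations of two monic polynomials of the same degree are real-rooted, then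
the one with the larger largest root is nonpositive at the largest root of the other one. -/
lemma eval_nonpos_of_convexComb_realRooted {n : ℕ} {f g : Polynomial ℝ} (hf : f.Monic)
    (hg : g.Monic) (hfn : f.natDegree = n) (hgn : g.natDegree = n)
    (hr : ∀ p : ℝ, 0 ≤ p → p ≤ 1 → ∀ z : ℂ, 0 < z.im →
      Polynomial.aeval z (Polynomial.C p * f + Polynomial.C (1 - p) * g) ≠ 0)
    {x y : ℝ} (hxy : x ≤ y) (hfx : ∀ z, x < z → 0 < f.eval z)
    (hgy : g.eval y = 0) (hgy' : ∀ z, y < z → 0 < g.eval z) : g.eval x ≤ 0 := by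
  by_contra! hgx
  obtain ⟨δ, hδ, hgδ⟩ : ∃ δ > 0, ∀ z, x ≤ z → z ≤ x + δ → 0 < g.eval z := by
    have h1 := g.continuous.continuousAt.eventually (lt_mem_nhds hgx)
    obtain ⟨ε, hε, h2⟩ := Metric.eventually_nhds_iff.mp h1
    refine ⟨ε / 2, by positivity, fun z hz1 hz2 => h2 ?_⟩
    rw [Real.dist_eq, abs_of_nonneg (by linarith)]
    linarith
  have hyδ : x + δ ≤ y := by
    by_contra! hc
    exact absurd hgy (hgδ y hxy hc.le).ne'
  have hcont : ContinuousOn (fun z => -g.eval z / f.eval z) (Set.Icc (x + δ) y) :=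
    g.continuousOn.neg.div f.continuousOn fun z hz => (hfx z (by linarith [hz.1])).ne'
  obtain ⟨z₀, hz₀, hmax⟩ := isCompact_Icc.exists_isMaxOn (Set.nonempty_Icc.mpr hyδ) hcont
  set c := -g.eval z₀ / f.eval z₀ with hc
  have hfz : 0 < f.eval z₀ := hfx z₀ (by linarith [hz₀.1])
  have hc0 : 0 ≤ c := by
    have := hmax (Set.right_mem_Icc.mpr hyδ)
    simpa [hgy] using this
  have hxz : 0 < z₀ - x := by linarith [hz₀.1]
  have hpos : ∀ c' > c, ∀ z, x < z → 0 < c' * f.eval z + g.eval z := by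
    intro c' hc' z hz
    have hf0 := hfx z hz
    have hcf : 0 < c' * f.eval z := mul_pos (by linarith) hf0
    rcases le_or_gt z (x + δ) with h1 | h1
    · linarith [hgδ z hz.le h1]
    · rcases le_or_gt z y with h2 | h2
      · have := hmax (show z ∈ Set.Icc (x + δ) y from ⟨h1.le, h2⟩)
        have h3 : -g.eval z / f.eval z ≤ c := this
        rw [div_le_iff₀ hf0] at h3
        nlinarith
      · linarith [hgy' z h2]
  have key : ∀ c' > c, (z₀ - x) ^ n ≤ (c' - c) * f.eval z₀ := by
    intro c' hc'
    have hc1 : 0 < 1 + c' := by linarith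
    set p := c' / (1 + c') with hp
    have hp0 : 0 ≤ p := div_nonneg (by linarith) hc1.le
    have hp1 : p ≤ 1 := (div_le_one hc1).mpr (by linarith)
    have hm := Polynomial.Monic.convexComb hf hg hfn hgn p
    have hev : ∀ z, (Polynomial.C p * f + Polynomial.C (1 - p) * g).eval z =
        (c' * f.eval z + g.eval z) / (1 + c') := by
      intro z
      rw [Polynomial.eval_add, Polynomial.eval_mul, Polynomial.eval_mul, Polynomial.eval_C,
        Polynomial.eval_C, hp]
      field_simp
      ring
    have h1 := pow_le_eval_of_realRooted hm.1 (hr p hp0 hp1) (x := x) (z := z₀)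
      (fun z hz => by rw [hev]; exact div_pos (hpos c' hc' z hz) hc1) (by linarith)
    rw [hm.2, hev, le_div_iff₀ hc1] at h1
    have h2 : c * f.eval z₀ = -g.eval z₀ := by rw [hc]; field_simp
    have h3 : 0 < (z₀ - x) ^ n := pow_pos hxz n
    nlinarith
  have hP : 0 < (z₀ - x) ^ n := pow_pos hxz n
  have h := key (c + (z₀ - x) ^ n / (2 * f.eval z₀)) (by
    have : 0 < (z₀ - x) ^ n / (2 * f.eval z₀) := by positivity
    linarith)
  rw [add_sub_cancel_left] at h
  have h' : (z₀ - x) ^ n / (2 * f.eval z₀) * f.eval z₀ = (z₀ - x) ^ n / 2 := by field_simp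
  linarith

lemma forall_eval_pos_or_of_convexComb_realRooted {n : ℕ} {f g : Polynomial ℝ} (hf : f.Monic)
    (hg : g.Monic) (hfn : f.natDegree = n) (hgn : g.natDegree = n)
    (hr : ∀ p : ℝ, 0 ≤ p → p ≤ 1 → ∀ z : ℂ, 0 < z.im →
      Polynomial.aeval z (Polynomial.C p * f + Polynomial.C (1 - p) * g) ≠ 0)
    {p b : ℝ} (hp0 : 0 ≤ p) (hp1 : p ≤ 1)
    (hpos : ∀ z, b < z → 0 < (Polynomial.C p * f + Polynomial.C (1 - p) * g).eval z) :
    (∀ z, b < z → 0 < f.eval z) ∨ (∀ z, b < z → 0 < g.eval z) := by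
  by_contra! hc
  obtain ⟨⟨z₁, hz₁, hf₁⟩, z₂, hz₂, hg₂⟩ := hc
  obtain ⟨x, hx, hx0, hx'⟩ := hf.exists_largest_root hf₁
  obtain ⟨y, hy, hy0, hy'⟩ := hg.exists_largest_root hg₂
  rcases le_total x y with hxy | hxy
  · have h1 := eval_nonpos_of_convexComb_realRooted hf hg hfn hgn hr hxy hx' hy0 hy'
    have h2 := hpos x (by linarith)
    simp only [Polynomial.eval_add, Polynomial.eval_mul, Polynomial.eval_C, hx0] at h2
    nlinarith
  · have h1 := eval_nonpos_of_convexComb_realRooted hg hf hgn hfn (fun p h0 h1 z hz => by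
      have := hr (1 - p) (by linarith) (by linarith) z hz
      rwa [sub_sub_cancel, add_comm] at this) hxy hy' hx0 hx'
    have h2 := hpos y (by linarith)
    simp only [Polynomial.eval_add, Polynomial.eval_mul, Polynomial.eval_C, hy0] at h2
    nlinarith

/-- **Method of interlacing families** for sums of independent rank-one matrices. -/
theorem exists_charpoly_eval_pos_of_mixedCharpoly {V ι : Type*} [Fintype V] [DecidableEq V]
    [DecidableEq ι] (r : ι → Bool → V → ℝ) {b : ℝ} (l : List ι) (hl : l.Nodup)
    {B : Matrix V V ℝ} (hB : B.IsSymm)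
    (h : ∀ z, b < z → 0 < (mixedCharpoly (l.map fun e => (1 / 2, r e true, r e false)) B).eval z) :
    ∃ s : ι → Bool, ∀ z, b < z →
      0 < (B + (l.map fun e => vecMulVec (r e (s e)) (r e (s e))).sum).charpoly.eval z := by
  induction l generalizing B with
  | nil => exact ⟨fun _ => true, by simpa [mixedCharpoly] using h⟩
  | cons e l ih =>
    obtain ⟨hel, hl'⟩ := List.nodup_cons.mp hl
    have hsymm : ∀ v : V → ℝ, (B + vecMulVec v v).IsSymm := by
      intro v
      refine hB.add ?_
      ext i j
      simp [vecMulVec_apply, mul_comm]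
    have hstep : ∀ a, (∀ z, b < z → 0 < (mixedCharpoly
        (l.map fun e => (1 / 2, r e true, r e false)) (B + vecMulVec (r e a) (r e a))).eval z) →
        ∃ s : ι → Bool, ∀ z, b < z → 0 < (B + ((e :: l).map fun e =>
          vecMulVec (r e (s e)) (r e (s e))).sum).charpoly.eval z := by
      intro a ha
      obtain ⟨s, hs⟩ := ih hl' (hsymm _) ha
      refine ⟨Function.update s e a, ?_⟩
      have : (l.map fun e' => vecMulVec (r e' (Function.update s e a e'))
          (r e' (Function.update s e a e'))) =
          l.map fun e' => vecMulVec (r e' (s e')) (r e' (s e')) := by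
        refine List.map_congr_left fun e' he' => ?_
        rw [Function.update_of_ne (by rintro rfl; exact hel he')]
      rw [List.map_cons, List.sum_cons, this, Function.update_self, ← add_assoc]
      exact hs
    have hm := mixedCharpoly_monic (l.map fun e => ((1 / 2 : ℝ), r e true, r e false))
    rcases forall_eval_pos_or_of_convexComb_realRooted (hm _).1 (hm _).1 (hm _).2 (hm _).2
      (fun p hp0 hp1 z hz => by
        refine aeval_mixedCharpoly_ne_zero
          (L := (p, r e true, r e false) :: l.map fun e => (1 / 2, r e true, r e false))
          ?_ hB hz
        intro a ha
        rcases List.mem_cons.mp ha with rfl | ha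
        · exact ⟨hp0, hp1⟩
        · obtain ⟨e', -, rfl⟩ := List.mem_map.mp ha
          norm_num)
      (p := 1 / 2) (by norm_num) (by norm_num) h with h1 | h1
    · exact hstep true h1
    · exact hstep false h1

/-! ### The expected characteristic polynomial of a random signing -/

/-- The adjacency matrix of `G`, with the entries of an edge `e` multiplied by `1` or `-1`
according to `s e`. -/
noncomputable def signedAdj {V : Type*} (G : SimpleGraph V) (s : Sym2 V → Bool) : Matrix V V ℝ :=
  Matrix.of fun i j => if G.Adj i j then (if s s(i, j) then 1 else -1) else 0

lemma signedAdj_comm {V : Type*} (G : SimpleGraph V) (s : Sym2 V → Bool) (i j : V) :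
    signedAdj G s i j = signedAdj G s j i := by
  simp [signedAdj, G.adj_comm i j, Sym2.eq_swap (a := i)]

/-- The matrix `x - signedAdj G s`, with the rows and columns outside of `S` replaced by those of
the identity matrix. -/
noncomputable def signedCharmatrix {V : Type*} [DecidableEq V] (G : SimpleGraph V) (x : ℝ)
    (S : Finset V) (s : Sym2 V → Bool) : Matrix V V ℝ :=
  Matrix.of fun i j => if i ∈ S ∧ j ∈ S then (if i = j then x else -signedAdj G s i j)
    else if i = j then 1 else 0

lemma adjugate_apply_eq_det_updateCol {V : Type*} [Fintype V] [DecidableEq V] (M : Matrix V V ℝ)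
    (i j : V) : M.adjugate i j = (M.updateCol i (Pi.single j 1)).det := by
  rw [← det_transpose, ← updateRow_transpose, ← adjugate_apply, ← adjugate_transpose,
    transpose_apply]

lemma det_updateCol_of_row_eq_single {V : Type*} [Fintype V] [DecidableEq V]
    {M : Matrix V V ℝ} {v : V} (h : M v = Pi.single v 1) :
    (M.updateCol v (Pi.single v 1)).det = M.det := by
  rw [← adjugate_apply_eq_det_updateCol, adjugate_apply, ← h, updateRow_eq_self]

lemma det_updateRow_of_col_eq_single {V : Type*} [Fintype V] [DecidableEq V]
    {M : Matrix V V ℝ} {v : V} (h : M.col v = Pi.single v 1) :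
    (M.updateRow v (Pi.single v 1)).det = M.det := by
  rw [← det_transpose, ← updateCol_transpose, det_updateCol_of_row_eq_single (M := Mᵀ) h,
    det_transpose]

lemma det_eq_add_sum_updateRow_updateCol {V : Type*} [Fintype V] [DecidableEq V]
    (M : Matrix V V ℝ) (v : V) :
    M.det = M v v * (M.updateRow v (Pi.single v 1)).det +
      ∑ u ∈ Finset.univ.erase v, ∑ w ∈ Finset.univ.erase v,
        M v u * M w v * ((M.updateRow v (Pi.single u 1)).updateCol v (Pi.single w 1)).det := by
  rw [det_eq_sum_mul_adjugate_row M v, ← Finset.add_sum_erase _ _ (Finset.mem_univ v),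
    adjugate_apply]
  congr 1
  refine Finset.sum_congr rfl fun u hu => ?_
  rw [adjugate_apply, det_eq_sum_mul_adjugate_col _ v,
    ← Finset.add_sum_erase _ _ (Finset.mem_univ v), updateRow_self,
    Pi.single_eq_of_ne (Finset.ne_of_mem_erase hu).symm, zero_mul, zero_add, Finset.mul_sum]
  refine Finset.sum_congr rfl fun w hw => ?_
  rw [updateRow_ne (Finset.ne_of_mem_erase hw), adjugate_apply_eq_det_updateCol, mul_assoc]

lemma det_signedCharmatrix_updateRow_updateCol {V : Type*} [Fintype V] [DecidableEq V]
    (G : SimpleGraph V) (x : ℝ) (S : Finset V) (s : Sym2 V → Bool) {u v : V} (huv : u ≠ v) :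
    (((signedCharmatrix G x S s).updateRow v (Pi.single u 1)).updateCol v (Pi.single u 1)).det =
      -(signedCharmatrix G x ((S.erase v).erase u) s).det := by
  set K := ((signedCharmatrix G x S s).updateRow v (Pi.single u 1)).updateCol v (Pi.single u 1)
    with hK
  have hswap := det_permute (Equiv.swap u v) K
  rw [Equiv.Perm.sign_swap huv] at hswap
  have h1 : (K.submatrix (Equiv.swap u v) id).det = -K.det := by simpa using hswap
  set N := K.submatrix (Equiv.swap u v) id with hN
  have hrow : N u = Pi.single u 1 := by
    ext j
    by_cases hj : j = v <;> simp [hN, hK, updateRow_apply, hj, huv.symm]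
  have hcol : (N.updateCol u (Pi.single u 1)).col v = Pi.single v 1 := by
    ext i
    rcases eq_or_ne i u with rfl | hi
    · simp [hN, hK, huv.symm, huv]
    · rcases eq_or_ne i v with rfl | hi'
      · simp [hN, hK, hi]
      · simp [hN, hK, hi, hi', huv.symm, Equiv.swap_apply_of_ne_of_ne]
  rw [← neg_eq_iff_eq_neg, ← h1, ← det_updateCol_of_row_eq_single hrow,
    ← det_updateRow_of_col_eq_single hcol]
  congr 1
  ext i j
  rcases eq_or_ne i v with rfl | hi
  · simp [signedCharmatrix, Pi.single_apply, eq_comm]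
  rw [updateRow_ne hi]
  rcases eq_or_ne j u with rfl | hj
  · simp [signedCharmatrix, Pi.single_apply]
  rw [updateCol_ne hj]
  rcases eq_or_ne i u with rfl | hi'
  · rw [hrow]
    simp [signedCharmatrix, Pi.single_apply, eq_comm]
  rcases eq_or_ne j v with rfl | hj'
  · simp [hN, hK, signedCharmatrix, Equiv.swap_apply_of_ne_of_ne, hi, hi']
  · simp [hN, hK, signedCharmatrix, Equiv.swap_apply_of_ne_of_ne, hi, hi', hj, hj',
      updateRow_apply]

lemma sum_eq_sum_flip {ι : Type*} [Fintype ι] [DecidableEq ι] (e : ι) (φ : (ι → Bool) → ℝ) :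
    ∑ s, φ s = ∑ s, φ (Function.update s e (!s e)) := by
  have hinv : Function.Involutive fun s : ι → Bool => Function.update s e (!s e) := by
    intro s
    simp
  exact (Equiv.sum_comp (hinv.toPerm _) φ).symm

/-- The sum over all signings of the characteristic polynomials, evaluated at `x`, of the signed
adjacency matrices of the subgraph induced on `S`. -/
noncomputable def sumSignedDet {V : Type*} [Fintype V] [DecidableEq V] (G : SimpleGraph V) (x : ℝ)
    (S : Finset V) : ℝ :=
  ∑ s : Sym2 V → Bool, (signedCharmatrix G x S s).det

lemma signedCharmatrix_updateRow_self {V : Type*} [DecidableEq V]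
    (G : SimpleGraph V) (x : ℝ) (S : Finset V) (s : Sym2 V → Bool) (v : V) :
    ((signedCharmatrix G x S s).updateRow v (Pi.single v 1)).updateCol v (Pi.single v 1) =
      signedCharmatrix G x (S.erase v) s := by
  ext i j
  rcases eq_or_ne j v with rfl | hj
  · simp [signedCharmatrix, Pi.single_apply]
  rw [updateCol_ne hj]
  rcases eq_or_ne i v with rfl | hi
  · simp [signedCharmatrix, Pi.single_apply, eq_comm]
  · simp [signedCharmatrix, hi, hj]

lemma signedAdj_mul_self {V : Type*} (G : SimpleGraph V) (s : Sym2 V → Bool) (i j : V) :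
    signedAdj G s i j * signedAdj G s i j = if G.Adj i j then 1 else 0 := by
  simp only [signedAdj, of_apply]
  split_ifs <;> norm_num

lemma signedAdj_update_of_ne {V : Type*} [DecidableEq V] (G : SimpleGraph V)
    (s : Sym2 V → Bool) (b : Bool)
    {e : Sym2 V} {i j : V} (h : s(i, j) ≠ e) :
    signedAdj G (Function.update s e b) i j = signedAdj G s i j := by
  simp only [signedAdj, of_apply, Function.update_of_ne h]

lemma signedAdj_flip {V : Type*} [DecidableEq V] (G : SimpleGraph V) (s : Sym2 V → Bool) (i j : V) :
    signedAdj G (Function.update s s(i, j) (!s s(i, j))) i j = -signedAdj G s i j := by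
  simp only [signedAdj, of_apply, Function.update_self]
  split_ifs <;> simp_all

/-- The recurrence of the matching polynomial. -/
lemma sumSignedDet_eq {V : Type*} [Fintype V] [DecidableEq V] (G : SimpleGraph V) (x : ℝ)
    {S : Finset V} {v : V} (hv : v ∈ S) :
    sumSignedDet G x S = x * sumSignedDet G x (S.erase v) -
      ∑ u ∈ (S.erase v).filter (G.Adj v), sumSignedDet G x ((S.erase v).erase u) := by
  have hcross : ∀ u ∈ Finset.univ.erase v, ∀ w ∈ Finset.univ.erase v, u ≠ w →
      ∑ s : Sym2 V → Bool, signedCharmatrix G x S s v u * signedCharmatrix G x S s w v *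
        (((signedCharmatrix G x S s).updateRow v (Pi.single u 1)).updateCol v
          (Pi.single w 1)).det = 0 := by
    intro u hu w hw huw
    have hu' := Finset.ne_of_mem_erase hu
    have hw' := Finset.ne_of_mem_erase hw
    rw [← self_eq_neg, ← Finset.sum_neg_distrib, sum_eq_sum_flip s(v, u)]
    refine Finset.sum_congr rfl fun s _ => ?_
    set s' := Function.update s s(v, u) (!s s(v, u)) with hs'
    have h1 : signedCharmatrix G x S s' v u = -signedCharmatrix G x S s v u := by
      simp only [signedCharmatrix, of_apply, if_neg hu'.symm, hs', signedAdj_flip]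
      split_ifs <;> simp
    have h2 : ∀ i j, s(i, j) ≠ s(v, u) →
        signedCharmatrix G x S s' i j = signedCharmatrix G x S s i j := by
      intro i j hij
      simp only [signedCharmatrix, of_apply, hs', signedAdj_update_of_ne G s _ hij]
    have h3 : ((signedCharmatrix G x S s').updateRow v (Pi.single u 1)).updateCol v
        (Pi.single w 1) = ((signedCharmatrix G x S s).updateRow v (Pi.single u 1)).updateCol v
        (Pi.single w 1) := by
      ext i j
      rcases eq_or_ne j v with rfl | hj
      · simp
      rcases eq_or_ne i v with rfl | hi
      · simp [hj]
      · rw [updateCol_ne hj, updateCol_ne hj, updateRow_ne hi, updateRow_ne hi, h2]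
        simp [hi, hj]
    rw [h1, h2 w v (by simp [hw', huw.symm]), h3]
    ring
  have hdiag : ∀ u ∈ Finset.univ.erase v,
      ∑ s : Sym2 V → Bool, signedCharmatrix G x S s v u * signedCharmatrix G x S s u v *
        (((signedCharmatrix G x S s).updateRow v (Pi.single u 1)).updateCol v
          (Pi.single u 1)).det =
      if u ∈ S ∧ G.Adj v u then -sumSignedDet G x ((S.erase v).erase u) else 0 := by
    intro u hu
    have hu' := Finset.ne_of_mem_erase hu
    simp only [det_signedCharmatrix_updateRow_updateCol G x S _ hu']
    have : ∀ s, signedCharmatrix G x S s v u * signedCharmatrix G x S s u v =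
        if u ∈ S ∧ G.Adj v u then 1 else 0 := by
      intro s
      have := signedAdj_mul_self G s v u
      by_cases huS : u ∈ S
      · simp only [signedCharmatrix, of_apply, hv, huS, hu', hu'.symm, and_self, if_true, if_false,
          signedAdj_comm G s u v, neg_mul_neg, true_and]
        exact this
      · simp [signedCharmatrix, huS, hu']
    simp only [this, sumSignedDet]
    split_ifs <;> simp
  have hS : (S.erase v).filter (G.Adj v) =
      (Finset.univ.erase v).filter fun u => u ∈ S ∧ G.Adj v u := by
    ext u
    simp
    tauto
  rw [hS, Finset.sum_filter, sub_eq_add_neg, ← Finset.sum_neg_distrib]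
  calc sumSignedDet G x S
      = ∑ s : Sym2 V → Bool, (x * (signedCharmatrix G x (S.erase v) s).det +
        ∑ u ∈ Finset.univ.erase v, ∑ w ∈ Finset.univ.erase v,
          signedCharmatrix G x S s v u * signedCharmatrix G x S s w v *
          (((signedCharmatrix G x S s).updateRow v (Pi.single u 1)).updateCol v
            (Pi.single w 1)).det) := by
        refine Finset.sum_congr rfl fun s _ => ?_
        rw [det_eq_add_sum_updateRow_updateCol _ v, ← signedCharmatrix_updateRow_self,
          det_updateCol_of_row_eq_single (updateRow_self ..)]
        congr 2
        simp [signedCharmatrix, hv]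
    _ = _ := by
        rw [Finset.sum_add_distrib, ← Finset.mul_sum, Finset.sum_comm]
        congr 1
        refine Finset.sum_congr rfl fun u hu => ?_
        rw [Finset.sum_comm, Finset.sum_eq_single_of_mem u hu
          fun w hw hwu => hcross u hu w hw hwu.symm, hdiag u hu]
        split_ifs <;> simp

/-- **Heilmann–Lieb bound**. -/
lemma sumSignedDet_pos {V : Type*} [Fintype V] [DecidableEq V] (G : SimpleGraph V) {q : ℕ}
    (hq : 1 ≤ q) (hG : ∀ v, (Finset.univ.filter (G.Adj v)).card ≤ q + 1) {x : ℝ}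
    (hx : 2 * √(q : ℝ) < x) (S : Finset V) :
    0 < sumSignedDet G x S ∧ ∀ v ∈ S, (S.filter (G.Adj v)).card ≤ q →
      √(q : ℝ) * sumSignedDet G x (S.erase v) ≤ sumSignedDet G x S := by
  have hq' : (1 : ℝ) ≤ q := by exact_mod_cast hq
  have hr1 : 1 ≤ √(q : ℝ) := Real.one_le_sqrt.mpr hq'
  have hrr : √(q : ℝ) * √(q : ℝ) = q := Real.mul_self_sqrt (by linarith)
  set r := √(q : ℝ)
  induction S using Finset.strongInduction with
  | H S ih =>
    have hrec : ∀ v ∈ S, x * sumSignedDet G x (S.erase v) - (S.filter (G.Adj v)).card *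
        (sumSignedDet G x (S.erase v) / r) ≤ sumSignedDet G x S := by
      intro v hv
      have hvS : (S.erase v).filter (G.Adj v) = S.filter (G.Adj v) := by
        ext u
        simp only [Finset.mem_filter, Finset.mem_erase]
        exact ⟨fun h => ⟨h.1.2, h.2⟩, fun h => ⟨⟨h.2.ne', h.1⟩, h.2⟩⟩
      rw [sumSignedDet_eq G x hv, hvS, ← nsmul_eq_mul]
      refine sub_le_sub_left (Finset.sum_le_card_nsmul _ _ _ fun u hu => ?_) _
      obtain ⟨huS, huv⟩ := Finset.mem_filter.mp hu
      rw [le_div_iff₀ (by linarith), mul_comm]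
      refine (ih _ (Finset.erase_ssubset hv)).2 u (Finset.mem_erase.mpr ⟨huv.ne', huS⟩) ?_
      have hlt : ((S.erase v).filter (G.Adj u)).card <
          (Finset.univ.filter (G.Adj u)).card := by
        refine Finset.card_lt_card (Finset.ssubset_iff_of_subset ?_ |>.mpr ⟨v, ?_, ?_⟩)
        · exact Finset.filter_subset_filter _ (Finset.subset_univ _)
        · simpa using huv.symm
        · simp
      have := hG u
      omega
    have hpos : ∀ v ∈ S, 0 < sumSignedDet G x (S.erase v) :=
      fun v hv => (ih _ (Finset.erase_ssubset hv)).1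
    refine ⟨?_, fun v hv hc => ?_⟩
    · rcases S.eq_empty_or_nonempty with rfl | ⟨v, hv⟩
      · have : ∀ s, signedCharmatrix G x ∅ s = 1 := by
          intro s
          ext i j
          simp [signedCharmatrix, Matrix.one_apply]
        simp [sumSignedDet, this]
      · refine lt_of_lt_of_le ?_ (hrec v hv)
        have hc : ((S.filter (G.Adj v)).card : ℝ) ≤ q + 1 := by
          exact_mod_cast (Finset.card_le_card
            (Finset.filter_subset_filter _ (Finset.subset_univ S))).trans (hG v)
        have hp := hpos v hv
        have h1 : ((S.filter (G.Adj v)).card : ℝ) / r ≤ 2 * r := by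
          rw [div_le_iff₀ (by linarith)]
          nlinarith
        have h2 : ((S.filter (G.Adj v)).card : ℝ) * (sumSignedDet G x (S.erase v) / r) =
            (S.filter (G.Adj v)).card / r * sumSignedDet G x (S.erase v) := by ring
        rw [h2]
        nlinarith
    · refine le_trans ?_ (hrec v hv)
      have hc' : ((S.filter (G.Adj v)).card : ℝ) ≤ q := by exact_mod_cast hc
      have hp := hpos v hv
      have h1 : ((S.filter (G.Adj v)).card : ℝ) / r ≤ r := by
        rw [div_le_iff₀ (by linarith)]
        linarith
      have h2 : ((S.filter (G.Adj v)).card : ℝ) * (sumSignedDet G x (S.erase v) / r) =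
          (S.filter (G.Adj v)).card / r * sumSignedDet G x (S.erase v) := by ring
      rw [h2]
      nlinarith

/-! ### Existence of a good signing -/

lemma sum_charpoly_eval_eq_mixedCharpoly {V ι : Type*} [Fintype V] [DecidableEq V] [Fintype ι]
    [DecidableEq ι] (r : ι → Bool → V → ℝ) (l : List ι) (hl : l.Nodup) (B : Matrix V V ℝ) (z : ℝ) :
    ∑ s : ι → Bool,
        (B + (l.map fun e => vecMulVec (r e (s e)) (r e (s e))).sum).charpoly.eval z =
      Fintype.card (ι → Bool) *
        (mixedCharpoly (l.map fun e => (1 / 2, r e true, r e false)) B).eval z := by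
  induction l generalizing B with
  | nil => simp [mixedCharpoly]
  | cons e l ih =>
    obtain ⟨hel, hl'⟩ := List.nodup_cons.mp hl
    set φ : Bool → (ι → Bool) → ℝ := fun a s => (B + vecMulVec (r e a) (r e a) +
      (l.map fun e => vecMulVec (r e (s e)) (r e (s e))).sum).charpoly.eval z with hφ
    have hupd : ∀ a b s, φ a (Function.update s e b) = φ a s := by
      intro a b s
      have : (l.map fun e' => vecMulVec (r e' (Function.update s e b e'))
          (r e' (Function.update s e b e'))) =
          l.map fun e' => vecMulVec (r e' (s e')) (r e' (s e')) := by
        refine List.map_congr_left fun e' he' => ?_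
        rw [Function.update_of_ne (by rintro rfl; exact hel he')]
      simp only [hφ, this]
    have h1 : ∑ s : ι → Bool, φ (s e) s = ∑ s : ι → Bool, φ (!s e) s := by
      rw [sum_eq_sum_flip e]
      simp only [hupd, Function.update_self]
    have h2 : ∑ s : ι → Bool, φ (s e) s + ∑ s : ι → Bool, φ (!s e) s =
        ∑ s : ι → Bool, φ true s + ∑ s : ι → Bool, φ false s := by
      rw [← Finset.sum_add_distrib, ← Finset.sum_add_distrib]
      refine Finset.sum_congr rfl fun s _ => ?_
      cases s e <;> simp [add_comm]
    have h3 := ih hl' (B + vecMulVec (r e true) (r e true))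
    have h4 := ih hl' (B + vecMulVec (r e false) (r e false))
    simp only [List.map_cons, List.sum_cons, ← add_assoc, mixedCharpoly, Polynomial.eval_add,
      Polynomial.eval_mul, Polynomial.eval_C]
    change ∑ s : ι → Bool, φ (s e) s = _
    change ∑ s : ι → Bool, φ true s = _ at h3
    change ∑ s : ι → Bool, φ false s = _ at h4
    linarith

/-- The vector `δ_u + δ_v` or `δ_u - δ_v` attached to the edge `e = s(u, v)` and a sign. -/
noncomputable def edgeVec {V : Type*} [DecidableEq V] (e : Sym2 V) (a : Bool) (i : V) : ℝ :=
  if i = e.out.1 then 1 else if i = e.out.2 then (if a then 1 else -1) else 0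

lemma edgeVec_mul_edgeVec {V : Type*} [DecidableEq V] {e : Sym2 V} (he : ¬e.IsDiag) (a : Bool)
    (i j : V) : edgeVec e a i * edgeVec e a j = (if i = j then (if i ∈ e then 1 else 0) else 0) +
      if s(i, j) = e then (if a then 1 else -1) else 0 := by
  have h : e = s(e.out.1, e.out.2) := (Quot.out_eq e).symm
  simp only [edgeVec]
  generalize e.out.1 = u at *
  generalize e.out.2 = v at *
  subst h
  have huv : u ≠ v := by simpa using he
  simp only [Sym2.eq_iff, Sym2.mem_iff]
  by_cases hiu : i = u <;> by_cases hiv : i = v <;> by_cases hju : j = u <;>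
    by_cases hjv : j = v <;> by_cases hij : i = j <;> cases a <;> simp_all

lemma sum_vecMulVec_edgeVec {V : Type*} [Fintype V] [DecidableEq V] (G : SimpleGraph V)
    (s : Sym2 V → Bool) :
    (((Finset.univ.filter (· ∈ G.edgeSet)).toList.map
      fun e => vecMulVec (edgeVec e (s e)) (edgeVec e (s e))).sum) =
    Matrix.diagonal (fun i => ∑ e ∈ Finset.univ.filter (· ∈ G.edgeSet),
      if i ∈ e then (1 : ℝ) else 0) + signedAdj G s := by
  rw [Finset.sum_map_toList]
  ext i j
  rw [Matrix.sum_apply, Matrix.add_apply, Matrix.diagonal_apply]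
  rw [Finset.sum_congr rfl fun e he => (vecMulVec_apply _ _ i j).trans
    (edgeVec_mul_edgeVec (G.not_isDiag_of_mem_edgeSet (Finset.mem_filter.mp he).2) _ i j),
    Finset.sum_add_distrib]
  congr 1
  · split_ifs <;> simp
  · simp [signedAdj]

theorem exists_signing {V : Type*} [Fintype V] [DecidableEq V] (G : SimpleGraph V) {q : ℕ}
    (hq : 1 ≤ q) (hG : ∀ v, (Finset.univ.filter (G.Adj v)).card ≤ q + 1) :
    ∃ s : Sym2 V → Bool, ∀ z, 2 * √(q : ℝ) < z → 0 < (signedAdj G s).charpoly.eval z := by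
  set E := (Finset.univ.filter (· ∈ G.edgeSet)).toList with hE
  set D : Matrix V V ℝ := Matrix.diagonal (fun i => ∑ e ∈ Finset.univ.filter (· ∈ G.edgeSet),
    if i ∈ e then (1 : ℝ) else 0) with hD
  have hsum : ∀ s : Sym2 V → Bool, -D + (E.map fun e =>
      vecMulVec (edgeVec e (s e)) (edgeVec e (s e))).sum = signedAdj G s := by
    intro s
    rw [hE, sum_vecMulVec_edgeVec, neg_add_cancel_left]
  have hsymm : (-D).IsSymm := (isSymm_diagonal _).neg
  obtain ⟨s, hs⟩ := exists_charpoly_eval_pos_of_mixedCharpoly (b := 2 * √(q : ℝ)) edgeVec E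
    (Finset.nodup_toList _) hsymm fun z hz => by
      have h1 := sum_charpoly_eval_eq_mixedCharpoly edgeVec E (Finset.nodup_toList _) (-D) z
      simp only [hsum] at h1
      have h2 := (sumSignedDet_pos G hq hG hz Finset.univ).1
      have h3 : ∀ s, signedCharmatrix G z Finset.univ s =
          Matrix.scalar V z - signedAdj G s := by
        intro s
        ext i j
        rcases eq_or_ne i j with rfl | hij
        · simp [signedCharmatrix, signedAdj]
        · simp [signedCharmatrix, hij]
      simp only [sumSignedDet, h3, ← Matrix.eval_charpoly] at h2
      rw [h1] at h2
      exact pos_of_mul_pos_right h2 (Nat.cast_nonneg _)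
  exact ⟨s, by simpa only [hsum] using hs⟩

lemma charpoly_eval_eq_zero_of_mulVec_eq {V : Type*} [Fintype V] [DecidableEq V]
    {A : Matrix V V ℝ} {x : V → ℝ} (hx : x ≠ 0) {μ : ℝ} (h : A *ᵥ x = μ • x) :
    A.charpoly.eval μ = 0 := by
  rw [Matrix.eval_charpoly, ← Matrix.exists_mulVec_eq_zero_iff]
  refine ⟨x, hx, ?_⟩
  rw [Matrix.sub_mulVec, h]
  ext i
  simp

/-! ### Bipartite Ramanujan graphs and their double covers -/

/-- The sum of `x` over the neighbors of `v`. -/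
noncomputable def nbrSum {V : Type*} [Fintype V] (G : SimpleGraph V) (x : V → ℝ) (v : V) : ℝ :=
  ∑ u, if G.Adj v u then x u else 0

/-- A `(q+1)`-regular graph with proper 2-coloring `c`, whose eigenvalues satisfy the Ramanujan
bound and whose eigenvalue `q + 1` is simple. -/
structure BipartiteRamanujan {V : Type*} [Fintype V] (q : ℕ) (G : SimpleGraph V)
    (c : V → Bool) : Prop where
  coloring : ∀ u v, G.Adj u v → c u ≠ c v
  regular : ∀ v, nbrSum G (fun _ => 1) v = q + 1
  bound : ∀ (μ : ℝ) (x : V → ℝ), x ≠ 0 → (∀ v, nbrSum G x v = μ * x v) →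
    |μ| = (q : ℝ) + 1 ∨ |μ| ≤ 2 * √(q : ℝ)
  simple : ∀ x : V → ℝ, (∀ v, nbrSum G x v = (q + 1) * x v) → ∀ u v, x u = x v

/-- The complete bipartite graph with `n + n` vertices. -/
def doubleComplete (n : ℕ) : SimpleGraph (Fin n × Bool) where
  Adj a b := a.2 ≠ b.2
  symm := ⟨fun _ _ h => h.symm⟩
  loopless := ⟨fun _ h => h rfl⟩

lemma nbrSum_doubleComplete (n : ℕ) (x : Fin n × Bool → ℝ) (v : Fin n × Bool) :
    nbrSum (doubleComplete n) x v = ∑ j, x (j, !v.2) := by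
  rw [nbrSum, Fintype.sum_prod_type]
  refine Finset.sum_congr rfl fun j _ => ?_
  rcases v with ⟨i, a⟩
  cases a <;> simp [doubleComplete]

lemma bipartiteRamanujan_doubleComplete (q : ℕ) :
    BipartiteRamanujan q (doubleComplete (q + 1)) Prod.snd where
  coloring _ _ h := h
  regular v := by simp [nbrSum_doubleComplete]
  bound μ x hx h := by
    simp only [nbrSum_doubleComplete] at h
    rcases eq_or_ne μ 0 with rfl | hμ
    · right
      simp
    left
    have hconst : ∀ i j a, x (i, a) = x (j, a) := by
      intro i j a
      have := (h (i, a)).symm.trans (h (j, a))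
      exact mul_left_cancel₀ hμ this
    have hsum : ∀ i a, ∑ j, x (j, a) = (q + 1) * x (i, a) := by
      intro i a
      rw [Finset.sum_congr rfl fun j _ => hconst j i a]
      simp
    obtain ⟨⟨i, a⟩, hia⟩ := Function.ne_iff.mp hx
    have h1 := h (i, a)
    have h2 := h (i, !a)
    rw [hsum i] at h1 h2
    simp only [Bool.not_not] at h2
    have h3 : μ ^ 2 = ((q : ℝ) + 1) ^ 2 := by
      refine mul_right_cancel₀ hia ?_
      linear_combination (-μ) * h1 - (q + 1) * h2
    rw [← abs_of_nonneg (show (0 : ℝ) ≤ (q : ℝ) + 1 by positivity)]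
    exact (sq_eq_sq_iff_abs_eq_abs _ _).mp h3
  simple x h := by
    simp only [nbrSum_doubleComplete] at h
    have hq : (q : ℝ) + 1 ≠ 0 := by positivity
    have hconst : ∀ i j a, x (i, a) = x (j, a) := by
      intro i j a
      have := (h (i, a)).symm.trans (h (j, a))
      exact mul_left_cancel₀ hq this
    have hflip : ∀ i a, x (i, !a) = x (i, a) := by
      intro i a
      have h1 := h (i, a)
      rw [Finset.sum_congr rfl fun j _ => hconst j i _] at h1
      simp only [Finset.sum_const, Finset.card_univ, Fintype.card_fin, nsmul_eq_mul] at h1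
      push_cast at h1
      exact mul_left_cancel₀ hq h1
    rintro ⟨i, a⟩ ⟨j, b⟩
    rw [hconst i j a]
    rcases Bool.eq_or_eq_not a b with rfl | rfl
    · rfl
    · exact hflip j b

/-- The double cover of `G` defined by the signing `s`. -/
def signedCover {V : Type*} (G : SimpleGraph V) (s : Sym2 V → Bool) :
    SimpleGraph (V × Bool) where
  Adj a b := G.Adj a.1 b.1 ∧ (a.2 = b.2 ↔ s s(a.1, b.1) = true)
  symm := ⟨fun a b h => ⟨h.1.symm, by rw [eq_comm, Sym2.eq_swap]; exact h.2⟩⟩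
  loopless := ⟨fun a h => G.loopless.irrefl a.1 h.1⟩

lemma nbrSum_signedCover {V : Type*} [Fintype V] (G : SimpleGraph V) (s : Sym2 V → Bool)
    (x : V × Bool → ℝ) (v : V) (a : Bool) :
    nbrSum (signedCover G s) x (v, a) =
      nbrSum G (fun u => x (u, if s s(v, u) then a else !a)) v := by
  rw [nbrSum, nbrSum, Fintype.sum_prod_type]
  refine Finset.sum_congr rfl fun u _ => ?_
  by_cases h : G.Adj v u <;> cases a <;> cases hs : s s(v, u) <;> simp [signedCover, h, hs]

lemma BipartiteRamanujan.card_filter_adj {V : Type*} [Fintype V] {q : ℕ} {G : SimpleGraph V}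
    {c : V → Bool} (hG : BipartiteRamanujan q G c) (v : V) :
    (Finset.univ.filter (G.Adj v)).card = q + 1 := by
  have := hG.regular v
  rw [nbrSum, ← Finset.sum_filter] at this
  simp only [Finset.sum_const, nsmul_eq_mul, mul_one] at this
  exact_mod_cast this

lemma two_mul_sqrt_lt {q : ℕ} (hq : 2 ≤ q) : 2 * √(q : ℝ) < q + 1 := by
  have hq' : (2 : ℝ) ≤ q := by exact_mod_cast hq
  have h1 : √(q : ℝ) * √(q : ℝ) = q := Real.mul_self_sqrt (by linarith)
  have h2 : 1 < √(q : ℝ) := Real.lt_sqrt_of_sq_lt (by linarith)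
  nlinarith

lemma BipartiteRamanujan.exists_signedCover {V : Type*} [Fintype V] {q : ℕ} (hq : 2 ≤ q)
    {G : SimpleGraph V} {c : V → Bool} (hG : BipartiteRamanujan q G c) :
    ∃ s, BipartiteRamanujan q (signedCover G s) (fun a => c a.1) := by
  obtain ⟨s, hs⟩ := exists_signing G (by omega : 1 ≤ q) fun v => (hG.card_filter_adj v).le
  have hupper : ∀ (μ : ℝ) (x : V → ℝ), x ≠ 0 → signedAdj G s *ᵥ x = μ • x →
      μ ≤ 2 * √(q : ℝ) := by
    intro μ x hx h
    by_contra! hc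
    exact (hs μ hc).ne' (charpoly_eval_eq_zero_of_mulVec_eq hx h)
  have habs : ∀ (μ : ℝ) (x : V → ℝ), x ≠ 0 → signedAdj G s *ᵥ x = μ • x →
      |μ| ≤ 2 * √(q : ℝ) := by
    intro μ x hx h
    refine abs_le'.mpr ⟨hupper μ x hx h, hupper (-μ) (fun v => (if c v then 1 else -1) * x v) ?_ ?_⟩
    · obtain ⟨v, hv⟩ := Function.ne_iff.mp hx
      refine Function.ne_iff.mpr ⟨v, mul_ne_zero ?_ hv⟩
      split_ifs <;> norm_num
    · ext v
      have hv := congrFun h v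
      simp only [mulVec, dotProduct, Pi.smul_apply, smul_eq_mul] at hv ⊢
      have : ∀ u, signedAdj G s v u * ((if c u then 1 else -1) * x u) =
          -(if c v then 1 else -1) * (signedAdj G s v u * x u) := by
        intro u
        by_cases huv : G.Adj v u
        · have := hG.coloring v u huv
          cases hcv : c v <;> cases hcu : c u <;> simp_all
        · simp [signedAdj, huv]
      rw [Finset.sum_congr rfl fun u _ => this u, ← Finset.mul_sum, hv]
      ring
  have hplus : ∀ (μ : ℝ) (x : V × Bool → ℝ), (∀ v, nbrSum (signedCover G s) x v = μ * x v) →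
      ∀ v, nbrSum G (fun u => x (u, true) + x (u, false)) v = μ * (x (v, true) + x (v, false)) := by
    intro μ x h v
    rw [mul_add, ← h, ← h, nbrSum_signedCover, nbrSum_signedCover]
    simp only [nbrSum]
    rw [← Finset.sum_add_distrib]
    refine Finset.sum_congr rfl fun u _ => ?_
    by_cases hvu : G.Adj v u <;> cases s s(v, u) <;> simp [hvu, add_comm]
  have hminus : ∀ (μ : ℝ) (x : V × Bool → ℝ), (∀ v, nbrSum (signedCover G s) x v = μ * x v) →
      signedAdj G s *ᵥ (fun u => x (u, true) - x (u, false)) =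
        μ • fun u => x (u, true) - x (u, false) := by
    intro μ x h
    ext v
    rw [Pi.smul_apply, smul_eq_mul, mul_sub, ← h, ← h, nbrSum_signedCover, nbrSum_signedCover]
    simp only [nbrSum, mulVec, dotProduct]
    rw [← Finset.sum_sub_distrib]
    refine Finset.sum_congr rfl fun u _ => ?_
    by_cases hvu : G.Adj v u <;> cases hsv : s s(v, u) <;> simp [hvu, hsv, signedAdj]
  refine ⟨s, fun u v h => hG.coloring _ _ h.1, fun ⟨v, a⟩ => ?_, fun μ x hx h => ?_, fun x h => ?_⟩
  · rw [nbrSum_signedCover]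
    exact hG.regular v
  · by_cases hm : (fun u => x (u, true) - x (u, false)) = 0
    · refine hG.bound μ _ ?_ (hplus μ x h)
      intro hp
      apply hx
      ext ⟨v, a⟩
      have h1 := congrFun hm v
      have h2 := congrFun hp v
      simp only [Pi.zero_apply] at h1 h2 ⊢
      cases a <;> linarith
    · exact Or.inr (habs μ _ hm (hminus μ x h))
  · have hm : (fun u => x (u, true) - x (u, false)) = 0 := by
      by_contra hm
      have := hupper _ _ hm (hminus _ x h)
      linarith [two_mul_sqrt_lt hq]
    have hp := hG.simple _ (hplus _ x h)
    have key : ∀ v a, x (v, a) = (x (v, true) + x (v, false)) / 2 := by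
      intro v a
      have h1 := congrFun hm v
      simp only [Pi.zero_apply] at h1
      cases a <;> linarith
    rintro ⟨u, a⟩ ⟨v, b⟩
    rw [key u a, key v b, hp u v]

lemma BipartiteRamanujan.connected {V : Type*} [Fintype V] [Nonempty V] {q : ℕ}
    {G : SimpleGraph V} {c : V → Bool} (hG : BipartiteRamanujan q G c) : G.Connected := by
  refine ⟨fun u v => ?_⟩
  have h := hG.simple (fun w => if G.Reachable u w then 1 else 0) (fun w => by
    rw [← hG.regular w, nbrSum, nbrSum, Finset.sum_mul]
    refine Finset.sum_congr rfl fun w' _ => ?_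
    by_cases hw : G.Adj w w'
    · have : G.Reachable u w' ↔ G.Reachable u w :=
        ⟨fun h => h.trans hw.symm.reachable, fun h => h.trans hw.reachable⟩
      simp [hw, this]
    · simp [hw]) u v
  by_contra hc
  simp [hc] at h

lemma BipartiteRamanujan.comap_equiv {V W : Type*} [Fintype V] [Fintype W] {q : ℕ}
    {G : SimpleGraph V} {c : V → Bool} (hG : BipartiteRamanujan q G c) (e : W ≃ V) :
    BipartiteRamanujan q (G.comap e) (c ∘ e) := by
  have hsum : ∀ x v, nbrSum (G.comap e) x v = nbrSum G (x ∘ e.symm) (e v) := by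
    intro x v
    simp only [nbrSum, SimpleGraph.comap_adj]
    rw [← e.sum_comp]
    simp
  refine ⟨fun u v h => hG.coloring _ _ h, fun v => ?_, fun μ x hx h => ?_, fun x h u v => ?_⟩
  · rw [hsum]
    exact hG.regular (e v)
  · refine hG.bound μ (x ∘ e.symm) ?_ fun v => ?_
    · obtain ⟨w, hw⟩ := Function.ne_iff.mp hx
      exact Function.ne_iff.mpr ⟨e w, by simpa using hw⟩
    · have := h (e.symm v)
      rwa [hsum, e.apply_symm_apply] at this
  · have := hG.simple (x ∘ e.symm) (fun v => by
      have := h (e.symm v)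
      rwa [hsum, e.apply_symm_apply] at this) (e u) (e v)
    simpa using this

lemma exists_bipartiteRamanujan {q : ℕ} (hq : 2 ≤ q) (N : ℕ) :
    ∃ (V : Type) (_ : Fintype V) (G : SimpleGraph V) (c : V → Bool),
      N < Fintype.card V ∧ BipartiteRamanujan q G c := by
  induction N with
  | zero => exact ⟨_, _, _, _, Fintype.card_pos, bipartiteRamanujan_doubleComplete q⟩
  | succ N ih =>
    obtain ⟨V, _, G, c, hN, hG⟩ := ih
    obtain ⟨s, hs⟩ := hG.exists_signedCover hq
    refine ⟨_, _, _, _, ?_, hs⟩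
    rw [Fintype.card_prod, Fintype.card_bool]
    omega

/-- **Lubotzky–Phillips–Sarnak, Margulis, Morgenstern**: for every prime power `q` there
exist infinitely many finite connected `(q+1)`-regular Ramanujan graphs. -/
theorem exists_ramanujan_prime_power (q : ℕ) (hq : IsPrimePow q) (N : ℕ) :
    ∃ (n : ℕ) (G : SimpleGraph (Fin n)),
      n > N ∧ G.Connected ∧ G.IsRegularOfDegree (q + 1) ∧
      ∀ lam : ℝ, (∃ x : Fin n → ℝ, x ≠ 0 ∧ G.adjMatrix ℝ *ᵥ x = lam • x) →
        |lam| = (q : ℝ) + 1 ∨ |lam| ≤ 2 * Real.sqrt (q : ℝ) := by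
  obtain ⟨V, _, G₀, c, hN, hG₀⟩ := exists_bipartiteRamanujan hq.two_le N
  have hG := hG₀.comap_equiv (Fintype.equivFin V).symm
  set G := G₀.comap (Fintype.equivFin V).symm
  have : Nonempty (Fin (Fintype.card V)) := ⟨⟨0, by omega⟩⟩
  refine ⟨Fintype.card V, G, hN, hG.connected, fun v => ?_, ?_⟩
  · rw [← hG.card_filter_adj v, ← SimpleGraph.card_neighborFinset_eq_degree,
      SimpleGraph.neighborFinset_eq_filter]
  · rintro μ ⟨x, hx, h⟩
    refine hG.bound μ x hx fun v => ?_
    have hv := congrFun h v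
    rw [SimpleGraph.adjMatrix_mulVec_apply, SimpleGraph.neighborFinset_eq_filter,
      Finset.sum_filter] at hv
    exact hv
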